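/- Let χ be a Dirichlet character modulo q induced by the primitive Dirichlet character χ* modulo q*. Then for all x ≥ 2, |ψ_K(x, χ*∘N) − ψ_K(x, χ∘N)| ≪ (log qx)², where the implied constant depends only on K. -/

import Mathlib

/-!
Setting: `K` is a number field, Galois over `ℚ`, with ring of integers `𝓞 K`.
We formalize the objects from Smith, "A generalization of the
Barban-Davenport-Halberstam Theorem to number fields".
-/

open NumberField Ideal
open scoped Classical BigOperators

noncomputable section

/-- `𝔞` is a (positive) power of a nonzero prime ideal of `𝓞 K`. -/
def IsPrimeIdealPower {K : Type*} [Field K] [NumberField K] (𝔞 : Ideal (𝓞 K)) : Prop :=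
  ∃ (𝔭 : Ideal (𝓞 K)) (m : ℕ), 𝔭.IsPrime ∧ 𝔭 ≠ ⊥ ∧ 1 ≤ m ∧ 𝔞 = 𝔭 ^ m

/-- The von Mangoldt function on ideals of `𝓞 K`: `Λ_K(𝔭^m) = log N𝔭`, and `0` otherwise.
(For `𝔞 = 𝔭^m` with `𝔭` prime, the radical of `𝔞` is `𝔭`.) -/
def LambdaK (K : Type*) [Field K] [NumberField K] (𝔞 : Ideal (𝓞 K)) : ℝ :=
  if IsPrimeIdealPower 𝔞 then Real.log (absNorm 𝔞.radical) else 0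

/-- `ψ_K(x; q, a) = ∑_{N𝔭^m ≤ x, N𝔭^m ≡ a (mod q)} log N𝔭`. -/
def psiK (K : Type*) [Field K] [NumberField K] (x : ℝ) (q : ℕ) (a : ZMod q) : ℝ :=
  ∑' 𝔞 : Ideal (𝓞 K),
    if (absNorm 𝔞 : ℝ) ≤ x ∧ ((absNorm 𝔞 : ZMod q) = a) then LambdaK K 𝔞 else 0

/-- `G_q`: the image of `Gal(K(ζ_q)/K)` in `(ℤ/qℤ)ˣ` under restriction to `ℚ(ζ_q)` followed
by the canonical isomorphism `Gal(ℚ(ζ_q)/ℚ) ≅ (ℤ/qℤ)ˣ`; concretely, the range of the map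
sending `σ ∈ Gal(K(ζ_q)/K)` to the exponent `a ∈ (ℤ/qℤ)ˣ` with `σ(ζ_q) = ζ_q^a`. -/
def Gq (K : Type*) [Field K] [NumberField K] (q : ℕ) : Subgroup (ZMod q)ˣ :=
  if h : 0 < q then
    haveI : NeZero q := ⟨h.ne'⟩
    haveI : NeZero (((⟨q, h⟩ : ℕ+) : ℕ) : K) := ⟨Nat.cast_ne_zero.mpr h.ne'⟩
    ((IsCyclotomicExtension.zeta_spec q K
        (CyclotomicField q K)).autToPow K).range
  else ⊥

/-- `φ_K(q) = |G_q|`. -/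
def phiK (K : Type*) [Field K] [NumberField K] (q : ℕ) : ℕ :=
  Nat.card (Gq K q)

/-- `ψ_K(x, χ∘N) = ∑_{N𝔞 ≤ x} χ(N𝔞) Λ_K(𝔞)`. -/
def psiKChi (K : Type*) [Field K] [NumberField K] (x : ℝ) {q : ℕ}
    (χ : DirichletCharacter ℂ q) : ℂ :=
  ∑' 𝔞 : Ideal (𝓞 K),
    if (absNorm 𝔞 : ℝ) ≤ x then χ (absNorm 𝔞 : ZMod q) * (LambdaK K 𝔞 : ℂ) else 0

/-- `ψ'_K(x, χ∘N)`: equals `ψ_K(x, χ∘N) − x` when `χ` is trivial on `G_q`,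
and `ψ_K(x, χ∘N)` otherwise. -/
def psiKChi' (K : Type*) [Field K] [NumberField K] (x : ℝ) {q : ℕ}
    (χ : DirichletCharacter ℂ q) : ℂ :=
  if ∀ a ∈ Gq K q, χ (a : ZMod q) = 1 then psiKChi K x χ - x else psiKChi K x χ

/-- The common residue degree `f(K/ℚ; p)` of the primes of `K` above `p`
(well-defined when `K/ℚ` is Galois): any prime `𝔭` above `p` has `N𝔭 = p^f`. -/
def resDeg (K : Type*) [Field K] [NumberField K] (p : ℕ) : ℕ :=
  if h : ∃ 𝔭 : Ideal (𝓞 K), 𝔭.IsPrime ∧ 𝔭 ≠ ⊥ ∧ (p : 𝓞 K) ∈ 𝔭 then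
    (absNorm h.choose).factorization p
  else 0

/-- `D_K(n)`: the number of prime ideal powers `𝔭^m` of `𝓞 K` with `N𝔭^m = n`. -/
def DK (K : Type*) [Field K] [NumberField K] (n : ℕ) : ℕ :=
  Nat.card {𝔞 : Ideal (𝓞 K) // IsPrimeIdealPower 𝔞 ∧ absNorm 𝔞 = n}

/-- `Λ_K^*(n) = f(K/ℚ; p) · log p` if `n = p^k` is a prime power, and `0` otherwise. -/
def LambdaStarK (K : Type*) [Field K] [NumberField K] (n : ℕ) : ℝ :=
  if IsPrimePow n then (resDeg K n.minFac : ℝ) * Real.log n.minFac else 0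

end

lemma radical_pow_of_isPrime {R : Type*} [CommSemiring R] {𝔭 : Ideal R} (hp : 𝔭.IsPrime)
    {m : ℕ} (hm : 1 ≤ m) : (𝔭 ^ m).radical = 𝔭 := by
  rw [radical_pow _ (by omega), hp.radical]

section

variable {K : Type*} [Field K] [NumberField K]

lemma two_le_absNorm_of_isPrime {𝔭 : Ideal (𝓞 K)} (hp : 𝔭.IsPrime) (h0 : 𝔭 ≠ ⊥) :
    2 ≤ absNorm 𝔭 := by
  have h1 : absNorm 𝔭 ≠ 0 := fun h => h0 (absNorm_eq_zero_iff.mp h)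
  have h2 : absNorm 𝔭 ≠ 1 := fun h => hp.ne_top (absNorm_eq_one_iff.mp h)
  omega

/-- A finite set of nonzero primes dividing `q` has at most `[K : ℚ] * log q / log 2` elements. -/
lemma card_mul_log_two_le_of_natCast_mem {q : ℕ} (hq : 1 ≤ q) (T : Finset (Ideal (𝓞 K)))
    (hT : ∀ 𝔭 ∈ T, 𝔭.IsPrime ∧ 𝔭 ≠ ⊥ ∧ (q : 𝓞 K) ∈ 𝔭) :
    (T.card : ℝ) * Real.log 2 ≤ Module.finrank ℤ (𝓞 K) * Real.log q := by
  have hdvd : ∏ 𝔭 ∈ T, 𝔭 ∣ span {(q : 𝓞 K)} :=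
    Finset.prod_primes_dvd _ (fun 𝔭 h => prime_of_isPrime (hT 𝔭 h).2.1 (hT 𝔭 h).1)
      (fun 𝔭 h => dvd_span_singleton.mpr (hT 𝔭 h).2.2)
  have hle : 2 ^ T.card ≤ q ^ Module.finrank ℤ (𝓞 K) := by
    calc 2 ^ T.card ≤ ∏ 𝔭 ∈ T, absNorm 𝔭 :=
          Finset.pow_card_le_prod _ _ _
            fun 𝔭 h => two_le_absNorm_of_isPrime (hT 𝔭 h).1 (hT 𝔭 h).2.1
      _ = absNorm (∏ 𝔭 ∈ T, 𝔭) := (map_prod _ _ _).symm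
      _ ≤ q ^ Module.finrank ℤ (𝓞 K) := by
          rw [← absNorm_span_natCast (S := 𝓞 K) q]
          refine Nat.le_of_dvd ?_ (absNorm_dvd_absNorm_of_le (le_of_dvd hdvd))
          rw [absNorm_span_natCast]
          positivity
  have hlog : Real.log ((2 : ℝ) ^ T.card) ≤ Real.log ((q : ℝ) ^ Module.finrank ℤ (𝓞 K)) :=
    Real.log_le_log (by positivity) (by exact_mod_cast hle)
  rwa [Real.log_pow, Real.log_pow] at hlog

lemma natCast_mem_of_not_coprime_absNorm {𝔭 : Ideal (𝓞 K)} (hp : 𝔭.IsPrime) (h0 : 𝔭 ≠ ⊥)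
    {q m : ℕ} (h : ¬ (absNorm (𝔭 ^ m)).Coprime q) : (q : 𝓞 K) ∈ 𝔭 := by
  have : 𝔭.IsMaximal := hp.isMaximal h0
  obtain ⟨p, n, -, hmem, hprime, hnorm⟩ := exists_prime_and_absNorm_eq_pow 𝔭
  have hdvd : p ∣ q := by
    by_contra hpq
    refine h ?_
    rw [map_pow, hnorm]
    exact (((Nat.Prime.coprime_iff_not_dvd hprime).mpr hpq).pow_left n).pow_left m
  obtain ⟨k, rfl⟩ := hdvd
  rw [Nat.cast_mul]
  exact 𝔭.mul_mem_right _ (by exact_mod_cast hmem)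

lemma LambdaK_nonneg (𝔞 : Ideal (𝓞 K)) : 0 ≤ LambdaK K 𝔞 := by
  unfold LambdaK
  split_ifs
  · exact Real.log_natCast_nonneg _
  · exact le_rfl

/-- The powers of a fixed prime of norm at most `x` contribute at most `log x` to `ψ_K`. -/
lemma sum_LambdaK_le_log_of_radical_eq {x : ℝ} (hx : 2 ≤ x) (𝔭 : Ideal (𝓞 K))
    (S : Finset (Ideal (𝓞 K)))
    (hS : ∀ 𝔞 ∈ S, IsPrimeIdealPower 𝔞 ∧ (absNorm 𝔞 : ℝ) ≤ x ∧ 𝔞.radical = 𝔭) :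
    ∑ 𝔞 ∈ S, LambdaK K 𝔞 ≤ Real.log x := by
  have hlogx : 0 ≤ Real.log x := Real.log_nonneg (by linarith)
  obtain rfl | ⟨𝔟, h𝔟⟩ := S.eq_empty_or_nonempty
  · simpa using hlogx
  obtain ⟨hp, h0⟩ : 𝔭.IsPrime ∧ 𝔭 ≠ ⊥ := by
    obtain ⟨⟨𝔮, m, hq, hq0, hm, rfl⟩, -, hrad⟩ := hS 𝔟 h𝔟
    rw [radical_pow_of_isPrime hq hm] at hrad
    exact hrad ▸ ⟨hq, hq0⟩
  have hN : (2 : ℝ) ≤ absNorm 𝔭 := by exact_mod_cast two_le_absNorm_of_isPrime hp h0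
  have hL : 0 < Real.log (absNorm 𝔭) := Real.log_pos (by linarith)
  have hsub : S ⊆ (Finset.Icc 1 ⌊Real.log x / Real.log (absNorm 𝔭)⌋₊).image (𝔭 ^ ·) := by
    intro 𝔞 h𝔞
    obtain ⟨⟨𝔮, m, hq, hq0, hm, rfl⟩, hle, hrad⟩ := hS 𝔞 h𝔞
    rw [radical_pow_of_isPrime hq hm] at hrad
    subst hrad
    refine Finset.mem_image.mpr ⟨m, Finset.mem_Icc.mpr ⟨hm, Nat.le_floor ?_⟩, rfl⟩
    rw [le_div_iff₀ hL, ← Real.log_pow]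
    refine Real.log_le_log (by positivity) ?_
    simpa using hle
  have hcard : (S.card : ℝ) ≤ Real.log x / Real.log (absNorm 𝔭) := by
    have h1 : S.card ≤ ⌊Real.log x / Real.log (absNorm 𝔭)⌋₊ := by
      simpa using (Finset.card_le_card hsub).trans Finset.card_image_le
    exact (Nat.cast_le.mpr h1).trans (Nat.floor_le (by positivity))
  calc ∑ 𝔞 ∈ S, LambdaK K 𝔞 = ∑ 𝔞 ∈ S, Real.log (absNorm 𝔭) :=
        Finset.sum_congr rfl fun 𝔞 h => by rw [LambdaK, if_pos (hS 𝔞 h).1, (hS 𝔞 h).2.2]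
    _ = S.card * Real.log (absNorm 𝔭) := by simp
    _ ≤ Real.log x := (le_div_iff₀ hL).mp hcard

/-- The prime powers of norm at most `x` and not coprime to `q` contribute `O_K(log q log x)`. -/
lemma sum_LambdaK_not_coprime_le {q : ℕ} (hq : 1 ≤ q) {x : ℝ} (hx : 2 ≤ x)
    (S : Finset (Ideal (𝓞 K)))
    (hS : ∀ 𝔞 ∈ S, IsPrimeIdealPower 𝔞 ∧ (absNorm 𝔞 : ℝ) ≤ x ∧ ¬ (absNorm 𝔞).Coprime q) :
    ∑ 𝔞 ∈ S, LambdaK K 𝔞 ≤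
      Module.finrank ℤ (𝓞 K) / Real.log 2 * Real.log q * Real.log x := by
  have hlogx : 0 ≤ Real.log x := Real.log_nonneg (by linarith)
  have hlog2 : 0 < Real.log 2 := Real.log_pos one_lt_two
  have hT : ∀ 𝔭 ∈ S.image radical, 𝔭.IsPrime ∧ 𝔭 ≠ ⊥ ∧ (q : 𝓞 K) ∈ 𝔭 := by
    intro 𝔭 h
    obtain ⟨𝔞, h𝔞, rfl⟩ := Finset.mem_image.mp h
    obtain ⟨⟨𝔮, m, hq, hq0, hm, rfl⟩, -, hcop⟩ := hS 𝔞 h𝔞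
    rw [radical_pow_of_isPrime hq hm]
    exact ⟨hq, hq0, natCast_mem_of_not_coprime_absNorm hq hq0 hcop⟩
  calc ∑ 𝔞 ∈ S, LambdaK K 𝔞
      = ∑ 𝔭 ∈ S.image radical, ∑ 𝔞 ∈ S with 𝔞.radical = 𝔭, LambdaK K 𝔞 :=
        (Finset.sum_fiberwise_of_maps_to (fun _ h => Finset.mem_image_of_mem _ h) _).symm
    _ ≤ ∑ 𝔭 ∈ S.image radical, Real.log x := by
        refine Finset.sum_le_sum fun 𝔭 _ => sum_LambdaK_le_log_of_radical_eq hx 𝔭 _ fun 𝔞 h => ?_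
        obtain ⟨h1, h2⟩ := Finset.mem_filter.mp h
        exact ⟨(hS 𝔞 h1).1, (hS 𝔞 h1).2.1, h2⟩
    _ = (S.image radical).card * Real.log x := by simp
    _ ≤ Module.finrank ℤ (𝓞 K) / Real.log 2 * Real.log q * Real.log x := by
        refine mul_le_mul_of_nonneg_right ?_ hlogx
        rw [div_mul_eq_mul_div, le_div_iff₀ hlog2]
        exact card_mul_log_two_le_of_natCast_mem hq _ hT

lemma psiKChi_eq_sum {x : ℝ} {q : ℕ} (χ : DirichletCharacter ℂ q) (S : Finset (Ideal (𝓞 K)))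
    (hS : ∀ 𝔞, 𝔞 ∈ S ↔ (absNorm 𝔞 : ℝ) ≤ x) :
    psiKChi K x χ = ∑ 𝔞 ∈ S, χ (absNorm 𝔞 : ZMod q) * (LambdaK K 𝔞 : ℂ) := by
  rw [psiKChi, tsum_eq_sum (s := S) fun 𝔞 h => if_neg fun h' => h ((hS 𝔞).mpr h')]
  exact Finset.sum_congr rfl fun 𝔞 h => if_pos ((hS 𝔞).mp h)

lemma norm_sub_changeLevel_le_one {q r : ℕ} (hdvd : r ∣ q) (χ : DirichletCharacter ℂ r) (n : ℕ) :
    ‖χ (n : ZMod r) - DirichletCharacter.changeLevel hdvd χ (n : ZMod q)‖ ≤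
      if n.Coprime q then 0 else 1 := by
  split_ifs with h
  · have := DirichletCharacter.changeLevel_eq_cast_of_dvd χ hdvd (ZMod.unitOfCoprime n h)
    rw [ZMod.coe_unitOfCoprime, ZMod.cast_natCast hdvd] at this
    simp [this]
  · rw [MulChar.map_nonunit _ (mt (ZMod.isUnit_iff_coprime n q).mp h), sub_zero]
    exact χ.norm_le_one _

end

/-- **Character exchange (Lemma 2).**
If the Dirichlet character `χ` modulo `q` is induced by the primitive character `χ*`
modulo `q*`, then for all `x ≥ 2`,
`|ψ_K(x, χ*∘N) − ψ_K(x, χ∘N)| ≪ (log qx)²`, the implied constant depending only on `K`. -/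
theorem char_exchange (K : Type*) [Field K] [NumberField K] [IsGalois ℚ K] :
    ∃ C : ℝ, 0 < C ∧ ∀ (q qstar : ℕ), 1 ≤ q → ∀ (hdvd : qstar ∣ q)
      (χstar : DirichletCharacter ℂ qstar), χstar.IsPrimitive →
      ∀ x : ℝ, 2 ≤ x →
        ‖psiKChi K x χstar - psiKChi K x (DirichletCharacter.changeLevel hdvd χstar)‖ ≤
          C * Real.log (q * x) ^ 2 := by
  set C : ℝ := Module.finrank ℤ (𝓞 K) / Real.log 2
  have hlog2 : 0 < Real.log 2 := Real.log_pos one_lt_two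
  have hC0 : 0 ≤ C := by positivity
  refine ⟨C + 1, by positivity, fun q r hq hdvd χ _ x hx => ?_⟩
  have hfin : {𝔞 : Ideal (𝓞 K) | (absNorm 𝔞 : ℝ) ≤ x}.Finite := by
    refine (finite_setOfPred_absNorm_le (S := 𝓞 K) ⌊x⌋₊).subset fun 𝔞 h => ?_
    exact Nat.le_floor h
  have hmem : ∀ 𝔞, 𝔞 ∈ hfin.toFinset ↔ (absNorm 𝔞 : ℝ) ≤ x := fun 𝔞 => by simp
  have hlogq : 0 ≤ Real.log q := Real.log_natCast_nonneg q
  have hlogx : 0 ≤ Real.log x := Real.log_nonneg (by linarith)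
  have hlog : Real.log (q * x) = Real.log q + Real.log x :=
    Real.log_mul (by positivity) (by positivity)
  rw [psiKChi_eq_sum χ _ hmem, psiKChi_eq_sum _ _ hmem, ← Finset.sum_sub_distrib]
  calc _ ≤ ∑ 𝔞 ∈ hfin.toFinset,
          if IsPrimeIdealPower 𝔞 ∧ ¬ (absNorm 𝔞).Coprime q then LambdaK K 𝔞 else 0 := by
        refine norm_sum_le_of_le _ fun 𝔞 _ => ?_
        rw [← sub_mul, norm_mul, Complex.norm_of_nonneg (LambdaK_nonneg 𝔞)]
        refine (mul_le_mul_of_nonneg_right (norm_sub_changeLevel_le_one hdvd χ _)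
          (LambdaK_nonneg 𝔞)).trans ?_
        by_cases h1 : (absNorm 𝔞).Coprime q
        · rw [if_pos h1, if_neg fun h => h.2 h1, zero_mul]
        · by_cases h2 : IsPrimeIdealPower 𝔞
          · rw [if_neg h1, if_pos ⟨h2, h1⟩, one_mul]
          · simp [h2, LambdaK]
    _ ≤ C * Real.log q * Real.log x := by
        rw [← Finset.sum_filter]
        refine sum_LambdaK_not_coprime_le hq hx _ fun 𝔞 h => ?_
        obtain ⟨h1, h2, h3⟩ := Finset.mem_filter.mp h
        exact ⟨h2, (hmem 𝔞).mp h1, h3⟩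
    _ ≤ (C + 1) * Real.log (q * x) ^ 2 := by
        rw [hlog, mul_assoc]
        have h1 : Real.log q * Real.log x ≤ (Real.log q + Real.log x) ^ 2 := by nlinarith
        exact mul_le_mul (by linarith) h1 (by positivity) (by positivity)
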